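/- arXiv:2204.14150 — 5 statements merged into one kernel-verified Lean document; each statement's English description precedes it below -/
import Mathlib

section
/- Let G be a finite simple connected graph. Then the revised Szeged index of G can be written as a sum over ordered pairs of vertices: Sz*(G) = (1/2) · Σ_{(u,v) ∈ V(G)×V(G)} ( dis_G(u,v) + deq_G(u,u) − (1/2)·deq_G(u,v) ). -/
open Finset

attribute [local instance] Classical.propDecidable

variable {V : Type*}

/-- `n_G(s,t)`: the number of vertices strictly closer to `s` than to `t`. -/
noncomputable def closerCount [Fintype V] (G : SimpleGraph V) (s t : V) : ℕ :=
  (Finset.univ.filter fun w => G.dist w s < G.dist w t).card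

/-- `o_G(s,t)`: the number of vertices equidistant from `s` and `t`. -/
noncomputable def equidistCount [Fintype V] (G : SimpleGraph V) (s t : V) : ℕ :=
  (Finset.univ.filter fun w => G.dist w s = G.dist w t).card

lemma equidistCount_comm [Fintype V] (G : SimpleGraph V) (s t : V) :
    equidistCount G s t = equidistCount G t s := by
  unfold equidistCount
  congr 1
  ext w
  simp only [Finset.mem_filter]
  exact and_congr_right fun _ => ⟨Eq.symm, Eq.symm⟩

/-- `o_G` as a function on unordered pairs (edges). -/
noncomputable def equidistSym2 [Fintype V] (G : SimpleGraph V) : Sym2 V → ℕ :=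
  Sym2.lift ⟨fun s t => equidistCount G s t, fun s t => equidistCount_comm G s t⟩

/-- The Wiener index: the sum of distances over unordered pairs of vertices. -/
noncomputable def wiener [Fintype V] (G : SimpleGraph V) : ℕ :=
  ∑ p : Sym2 V, Sym2.lift ⟨fun u v => G.dist u v, fun _ _ => G.dist_comm⟩ p

/-- The Szeged index `Sz(G) = Σ_{{s,t} ∈ E(G)} n_G(s,t) n_G(t,s)`. -/
noncomputable def szeged [Fintype V] (G : SimpleGraph V) : ℕ :=
  ∑ e ∈ G.edgeFinset,
    Sym2.lift ⟨fun s t => closerCount G s t * closerCount G t s,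
      fun _ _ => Nat.mul_comm _ _⟩ e

/-- The revised Szeged index
`Sz*(G) = Σ_{{s,t} ∈ E(G)} (n_G(s,t) + o_G(s,t)/2) (n_G(t,s) + o_G(t,s)/2)`. -/
noncomputable def revisedSzeged [Fintype V] (G : SimpleGraph V) : ℚ :=
  ∑ e ∈ G.edgeFinset,
    Sym2.lift ⟨fun s t =>
      ((closerCount G s t : ℚ) + (equidistCount G s t : ℚ) / 2) *
        ((closerCount G t s : ℚ) + (equidistCount G t s : ℚ) / 2),
      fun _ _ => mul_comm _ _⟩ e

/-- An edge `{s,t}` is `(u,v)`-distance-disparate if `d(u,s) < d(u,t)` and `d(v,s) > d(v,t)`,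
or `d(u,s) > d(u,t)` and `d(v,s) < d(v,t)`. -/
def IsDisparate (G : SimpleGraph V) (u v : V) : Sym2 V → Prop :=
  Sym2.lift ⟨fun s t =>
    (G.dist u s < G.dist u t ∧ G.dist v t < G.dist v s) ∨
      (G.dist u t < G.dist u s ∧ G.dist v s < G.dist v t),
    fun _ _ => propext or_comm⟩

/-- `dis_G(u,v)`: the number of `(u,v)`-distance-disparate edges of `G`. -/
noncomputable def disCount [Fintype V] (G : SimpleGraph V) (u v : V) : ℕ :=
  (G.edgeFinset.filter (IsDisparate G u v)).card

/-- An edge `{s,t}` is `(u,v)`-distance-equal if `d(u,s) = d(u,t)` and `d(v,s) = d(v,t)`. -/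
def IsDistEqual (G : SimpleGraph V) (u v : V) : Sym2 V → Prop :=
  Sym2.lift ⟨fun s t => G.dist u s = G.dist u t ∧ G.dist v s = G.dist v t,
    fun _ _ => propext ⟨fun h => ⟨h.1.symm, h.2.symm⟩, fun h => ⟨h.1.symm, h.2.symm⟩⟩⟩

/-- `deq_G(u,v)`: the number of `(u,v)`-distance-equal edges of `G`. -/
noncomputable def deqCount [Fintype V] (G : SimpleGraph V) (u v : V) : ℕ :=
  (G.edgeFinset.filter (IsDistEqual G u v)).card

/-- A subgraph without cut vertices: it is connected and deleting any single vertex leaves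
it preconnected. -/
def NoCutVertexSub (G : SimpleGraph V) (H : G.Subgraph) : Prop :=
  H.Connected ∧ ∀ v : V, ((H.deleteVerts {v}).coe.Preconnected)

/-- A block of `G`: a maximal connected subgraph without a cut vertex. -/
def IsBlock (G : SimpleGraph V) (B : G.Subgraph) : Prop :=
  NoCutVertexSub G B ∧ ∀ H : G.Subgraph, NoCutVertexSub G H → B ≤ H → B = H

/-- The subgraph `B` is a single edge together with its two endpoints. -/
def IsEdgeBlock (G : SimpleGraph V) (B : G.Subgraph) : Prop :=
  ∃ (u v : V) (h : G.Adj u v), B = G.subgraphOfAdj h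

/-- The subgraph `B` is a cycle (of some length `n ≥ 3`). -/
def IsCycleBlock (G : SimpleGraph V) (B : G.Subgraph) : Prop :=
  ∃ n : ℕ, 3 ≤ n ∧ Nonempty (B.coe ≃g SimpleGraph.cycleGraph n)

/-- A cactus graph: a connected graph in which every block is an edge or a cycle. -/
def IsCactus (G : SimpleGraph V) : Prop :=
  G.Connected ∧ ∀ B : G.Subgraph, IsBlock G B → IsEdgeBlock G B ∨ IsCycleBlock G B

/-!
Let `o(e)` be the number of vertices equidistant from the two ends of an edge `e`. Counting pairs
(edge, pair of vertices) in two ways gives `∑_{u,v} dis(u,v) = 2 Sz(G)`, `∑_u deq(u,u) = ∑_e o(e)`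
and `∑_{u,v} deq(u,v) = ∑_e o(e)²`. On the other side, since `n(s,t) + n(t,s) + o(s,t) = |V|`,
expanding the product in `Sz*(G)` gives `Sz*(G) = Sz(G) + ∑_e (|V| o(e) / 2 - o(e)² / 4)`.
-/

section DoubleCounting

variable [Fintype V] (G : SimpleGraph V)

lemma closerCount_add_closerCount_add_equidistCount (s t : V) :
    closerCount G s t + closerCount G t s + equidistCount G s t = Fintype.card V := by
  simp only [closerCount, equidistCount, card_filter, ← sum_add_distrib, Fintype.card_eq_sum_ones]
  refine sum_congr rfl fun w _ => ?_
  rcases lt_trichotomy (G.dist w s) (G.dist w t) with h | h | h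
  · simp [h, h.not_gt, h.ne]
  · simp [h]
  · simp [h, h.not_gt, h.ne']

lemma card_filter_isDisparate (s t : V) :
    #{p : V × V | IsDisparate G p.1 p.2 s(s, t)} = 2 * (closerCount G s t * closerCount G t s) := by
  let closerTo (x y : V) : Finset V := {w | G.dist w x < G.dist w y}
  have pairs_eq : ({p : V × V | IsDisparate G p.1 p.2 s(s, t)} : Finset (V × V)) =
      closerTo s t ×ˢ closerTo t s ∪ closerTo t s ×ˢ closerTo s t := by
    ext p
    rw [mem_filter_univ]
    simp [closerTo, IsDisparate]
  have closer_disjoint : Disjoint (closerTo s t) (closerTo t s) :=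
    disjoint_filter.2 fun _ _ => lt_asymm
  rw [pairs_eq, card_union_of_disjoint (disjoint_product.2 (.inl closer_disjoint)),
    card_product, card_product, mul_comm #(closerTo t s), two_mul]
  rfl

lemma card_filter_isDistEqual (e : Sym2 V) :
    #{p : V × V | IsDistEqual G p.1 p.2 e} = equidistSym2 G e ^ 2 := by
  induction e using Sym2.ind with
  | _ s t =>
    let equidist : Finset V := {w | G.dist w s = G.dist w t}
    have pairs_eq : ({p : V × V | IsDistEqual G p.1 p.2 s(s, t)} : Finset (V × V)) =
        equidist ×ˢ equidist := by
      ext p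
      rw [mem_filter_univ]
      simp [equidist, IsDistEqual]
    rw [pairs_eq, card_product, ← sq]
    rfl

lemma card_filter_isDistEqual_self (e : Sym2 V) :
    #{u : V | IsDistEqual G u u e} = equidistSym2 G e := by
  induction e using Sym2.ind with
  | _ s t => simp [IsDistEqual, equidistSym2, equidistCount]

lemma sum_disCount : ∑ u, ∑ v, disCount G u v = 2 * szeged G := by
  calc ∑ u, ∑ v, disCount G u v
    _ = ∑ p : V × V, disCount G p.1 p.2 := (Fintype.sum_prod_type' _).symm
    _ = ∑ e ∈ G.edgeFinset, #{p : V × V | IsDisparate G p.1 p.2 e} :=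
      sum_card_bipartiteAbove_eq_sum_card_bipartiteBelow fun p : V × V => IsDisparate G p.1 p.2
    _ = 2 * szeged G := by
      rw [szeged, mul_sum]
      refine sum_congr rfl fun e _ => ?_
      induction e using Sym2.ind with
      | _ s t => exact card_filter_isDisparate G s t

lemma sum_deqCount :
    ∑ u, ∑ v, deqCount G u v = ∑ e ∈ G.edgeFinset, equidistSym2 G e ^ 2 := by
  calc ∑ u, ∑ v, deqCount G u v
    _ = ∑ p : V × V, deqCount G p.1 p.2 := (Fintype.sum_prod_type' _).symm
    _ = ∑ e ∈ G.edgeFinset, #{p : V × V | IsDistEqual G p.1 p.2 e} :=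
      sum_card_bipartiteAbove_eq_sum_card_bipartiteBelow fun p : V × V => IsDistEqual G p.1 p.2
    _ = ∑ e ∈ G.edgeFinset, equidistSym2 G e ^ 2 :=
      sum_congr rfl fun e _ => card_filter_isDistEqual G e

lemma sum_deqCount_self : ∑ u, deqCount G u u = ∑ e ∈ G.edgeFinset, equidistSym2 G e := by
  calc ∑ u, deqCount G u u
    _ = ∑ e ∈ G.edgeFinset, #{u : V | IsDistEqual G u u e} :=
      sum_card_bipartiteAbove_eq_sum_card_bipartiteBelow fun u => IsDistEqual G u u
    _ = ∑ e ∈ G.edgeFinset, equidistSym2 G e :=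
      sum_congr rfl fun e _ => card_filter_isDistEqual_self G e

lemma revisedSzeged_eq_szeged_add :
    revisedSzeged G = szeged G + ∑ e ∈ G.edgeFinset,
      ((Fintype.card V : ℚ) * equidistSym2 G e / 2 - (equidistSym2 G e : ℚ) ^ 2 / 4) := by
  rw [revisedSzeged, szeged, Nat.cast_sum, ← sum_add_distrib]
  refine sum_congr rfl fun e _ => ?_
  induction e using Sym2.ind with
  | _ s t =>
    simp only [Sym2.lift_mk, equidistSym2, equidistCount_comm G t s, Nat.cast_mul,
      ← closerCount_add_closerCount_add_equidistCount G s t, Nat.cast_add]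
    ring

end DoubleCounting

/-- A vertex outside the component of an edge has `SimpleGraph.dist` `0` to both of its ends, hence
counts as equidistant from them, just as it does with the convention that this distance is `∞`. -/
theorem revisedSzeged_eq_vertex_sum_general [Fintype V] (G : SimpleGraph V) :
    revisedSzeged G =
      (1 / 2 : ℚ) * ∑ u : V, ∑ v : V,
        ((disCount G u v : ℚ) + (deqCount G u u : ℚ)
          - (1 / 2 : ℚ) * (deqCount G u v : ℚ)) := by
  have sum_dis : ∑ u, ∑ v, (disCount G u v : ℚ) = 2 * szeged G := mod_cast sum_disCount G
  have sum_deq : ∑ u, ∑ v, (deqCount G u v : ℚ) = ∑ e ∈ G.edgeFinset, (equidistSym2 G e : ℚ) ^ 2 :=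
    mod_cast sum_deqCount G
  have sum_deq_self : ∑ u, (deqCount G u u : ℚ) = ∑ e ∈ G.edgeFinset, (equidistSym2 G e : ℚ) :=
    mod_cast sum_deqCount_self G
  simp only [revisedSzeged_eq_szeged_add, sum_sub_distrib, sum_add_distrib, sum_const, card_univ,
    nsmul_eq_mul, ← mul_sum, ← sum_div, sum_dis, sum_deq, sum_deq_self]
  ring

/-- **Theorem (revised Szeged index as a vertex sum).**
For a finite simple connected graph `G`,
`Sz*(G) = (1/2) Σ_{u,v ∈ V(G)} (dis_G(u,v) + deq_G(u,u) - (1/2) deq_G(u,v))`. -/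
theorem revisedSzeged_eq_vertex_sum [Fintype V] (G : SimpleGraph V) (hG : G.Connected) :
    revisedSzeged G =
      (1 / 2 : ℚ) * ∑ u : V, ∑ v : V,
        ((disCount G u v : ℚ) + (deqCount G u u : ℚ)
          - (1 / 2 : ℚ) * (deqCount G u v : ℚ)) :=
  revisedSzeged_eq_vertex_sum_general G
end

section
/- Let C be the cycle graph on n ≥ 3 vertices and let u and v be two distinct vertices of C. Then dis_C(u,v) = 2·d_C(u,v) if n is even, and dis_C(u,v) = 2·d_C(u,v) − 1 if n is odd. -/
open Finset

attribute [local instance] Classical.propDecidable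

variable {V : Type*}

/-! Orient every edge of the cycle as a step `s → s + 1`. The steps leading away from `u` form the
arc of `⌊n/2⌋` steps starting at `u`, and those leading toward `v` form the arc of `⌊n/2⌋` steps
ending at `v`. A disparate edge is a step in the intersection of two such arcs, for `(u, v)` or for
`(v, u)`, so everything reduces to the lengths of these two intersections. -/

theorem disCount_eq_card_filter_of_range_eq_edgeSet [Fintype V] {ι : Type*} [Fintype ι]
    {G : SimpleGraph V} {e : ι → Sym2 V} (he : Function.Injective e)
    (hrange : Set.range e = G.edgeSet) (u v : V) :
    disCount G u v = #{i | IsDisparate G u v (e i)} := by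
  have hedges : G.edgeFinset = univ.map ⟨e, he⟩ := by
    ext x
    simp [SimpleGraph.mem_edgeFinset, ← hrange]
  rw [disCount, hedges, filter_map, card_map]
  rfl

section Distance

variable {G : SimpleGraph V} {f : V → ℕ} {u v : V}

theorem le_add_dist_of_forall_adj_le_add_one (huv : G.Reachable u v)
    (hf : ∀ ⦃x y⦄, G.Adj x y → f y ≤ f x + 1) : f v ≤ f u + G.dist u v := by
  obtain ⟨w, hw⟩ := huv.exists_walk_length_eq_dist
  rw [← hw]
  clear hw huv
  induction w with
  | nil => exact Nat.le_add_right _ _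
  | cons hadj w ih =>
    have hstep := hf hadj
    rw [SimpleGraph.Walk.length_cons]
    omega

theorem exists_walk_length_le_of_exists_adj_lt
    (hdesc : ∀ x, x ≠ u → ∃ y, G.Adj y x ∧ f y < f x) (v : V) :
    ∃ w : G.Walk u v, w.length ≤ f v := by
  induction hk : f v using Nat.strong_induction_on generalizing v with
  | _ k ih =>
    rcases eq_or_ne v u with rfl | hvu
    · exact ⟨.nil, Nat.zero_le _⟩
    · obtain ⟨y, hadj, hlt⟩ := hdesc v hvu
      obtain ⟨w, hw⟩ := ih (f y) (hk ▸ hlt) y rfl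
      refine ⟨w.concat hadj, ?_⟩
      rw [SimpleGraph.Walk.length_concat]
      omega

theorem dist_eq_of_forall_adj_le_of_exists_adj_lt (hu : f u = 0)
    (hlip : ∀ ⦃x y⦄, G.Adj x y → f y ≤ f x + 1)
    (hdesc : ∀ x, x ≠ u → ∃ y, G.Adj y x ∧ f y < f x) (v : V) : G.dist u v = f v := by
  obtain ⟨w, hw⟩ := exists_walk_length_le_of_exists_adj_lt hdesc v
  apply le_antisymm ((SimpleGraph.dist_le w).trans hw)
  simpa only [hu, zero_add] using le_add_dist_of_forall_adj_le_add_one w.reachable hlip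

end Distance

section Cycle

variable {n : ℕ}

theorem val_sub_eq_ite (a b : Fin n) :
    (a - b).val = if b.val ≤ a.val then a.val - b.val else n + a.val - b.val := by
  have h := Fin.intCast_val_sub_eq_sub_add_ite a b
  simp only [Fin.le_def] at h
  split_ifs at h ⊢ <;> omega

theorem val_sub_add_val_sub {a b : Fin n} (hab : a ≠ b) : (a - b).val + (b - a).val = n := by
  rw [val_sub_eq_ite, val_sub_eq_ite]
  split_ifs <;> omega

theorem card_filter_val_sub_mem_Ico (u : Fin n) (a : ℕ) {b : ℕ} (hb : b ≤ n) :
    #{s : Fin n | (s - u).val ∈ Ico a b} = b - a := by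
  have : NeZero n := NeZero.of_pos u.pos
  rw [← Nat.card_Ico]
  refine card_nbij (fun s => (s - u).val) (fun s hs => (mem_filter.mp hs).2) ?_ fun i hi => ?_
  · exact (Fin.val_injective.comp sub_left_injective).injOn
  · have hin : i < n := (mem_Ico.mp hi).2.trans_le hb
    exact ⟨⟨i, hin⟩ + u, by simpa using hi, by simp⟩

variable [NeZero n]

theorem val_add_one_sub_eq_ite (s u : Fin n) :
    (s + 1 - u).val = if (s - u).val + 1 = n then 0 else (s - u).val + 1 := by
  obtain ⟨m, rfl⟩ := Nat.exists_eq_succ_of_ne_zero (NeZero.ne n)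
  simp [add_sub_right_comm, Fin.val_add_one, Fin.ext_iff]

theorem cycleGraph_adj_iff_eq_add_one {s t : Fin n} :
    (SimpleGraph.cycleGraph n).Adj s t ↔ s ≠ t ∧ (s = t + 1 ∨ t = s + 1) := by
  obtain ⟨m, rfl⟩ := Nat.exists_eq_succ_of_ne_zero (NeZero.ne n)
  simp [SimpleGraph.cycleGraph_eq_circulantGraph, sub_eq_iff_eq_add, add_comm]

theorem cycleGraph_adj_add_one (hn : 2 ≤ n) (s : Fin n) :
    (SimpleGraph.cycleGraph n).Adj s (s + 1) := by
  have hone : (1 : Fin n) ≠ 0 := mt Fin.one_eq_zero_iff.mp (by omega)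
  exact cycleGraph_adj_iff_eq_add_one.mpr ⟨left_ne_add.mpr hone, .inr rfl⟩

theorem dist_cycleGraph (u v : Fin n) :
    (SimpleGraph.cycleGraph n).dist u v = min (v - u).val (n - (v - u).val) := by
  refine dist_eq_of_forall_adj_le_of_exists_adj_lt (f := fun s => min (s - u).val (n - (s - u).val))
    (by simp) (fun x y hxy => ?_) (fun x hxu => ?_) v
  · obtain ⟨-, rfl | rfl⟩ := cycleGraph_adj_iff_eq_add_one.mp hxy
    · grind [val_add_one_sub_eq_ite]
    · grind [val_add_one_sub_eq_ite]
  · have hpos : (x - u).val ≠ 0 := by simpa [sub_eq_zero] using hxu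
    have hn : 2 ≤ n := by omega
    rcases le_or_gt (2 * (x - u).val) n with hhalf | hhalf
    · have hadj := cycleGraph_adj_add_one hn (x - 1)
      have hval := val_add_one_sub_eq_ite (x - 1) u
      rw [sub_add_cancel] at hadj hval
      exact ⟨x - 1, hadj, by grind⟩
    · have hval := val_add_one_sub_eq_ite x u
      exact ⟨x + 1, (cycleGraph_adj_add_one hn x).symm, by grind⟩

theorem dist_cycleGraph_lt_dist_add_one_iff {u s : Fin n} :
    (SimpleGraph.cycleGraph n).dist u s < (SimpleGraph.cycleGraph n).dist u (s + 1) ↔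
      (s - u).val < n / 2 := by
  rw [dist_cycleGraph, dist_cycleGraph, val_add_one_sub_eq_ite]
  split_ifs <;> omega

theorem dist_cycleGraph_add_one_lt_dist_iff {u s : Fin n} :
    (SimpleGraph.cycleGraph n).dist u (s + 1) < (SimpleGraph.cycleGraph n).dist u s ↔
      n ≤ (s - u).val + n / 2 := by
  rw [dist_cycleGraph, dist_cycleGraph, val_add_one_sub_eq_ite]
  split_ifs <;> omega

/-- The steps `s → s + 1` of the cycle leading away from `u` and toward `v`, each encoded by its
initial vertex `s`. -/
noncomputable def stepsFromTo (u v : Fin n) : Finset (Fin n) :=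
  {s | (SimpleGraph.cycleGraph n).dist u s < (SimpleGraph.cycleGraph n).dist u (s + 1) ∧
    (SimpleGraph.cycleGraph n).dist v (s + 1) < (SimpleGraph.cycleGraph n).dist v s}

-- The subtraction truncates at `0` when the arc of steps toward `v` starts behind `u`.
theorem stepsFromTo_eq_filter_val_sub_mem_Ico (u v : Fin n) :
    stepsFromTo u v = univ.filter fun s =>
      (s - u).val ∈ Ico ((v - u).val - n / 2) (min (v - u).val (n / 2)) := by
  refine filter_congr fun s _ => ?_
  have hval := val_sub_eq_ite (s - u) (v - u)
  rw [sub_sub_sub_cancel_right] at hval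
  rw [dist_cycleGraph_lt_dist_add_one_iff, dist_cycleGraph_add_one_lt_dist_iff, hval, mem_Ico]
  split_ifs <;> omega

theorem card_stepsFromTo (u v : Fin n) :
    #(stepsFromTo u v) = min (v - u).val (2 * (n / 2) - (v - u).val) := by
  rw [stepsFromTo_eq_filter_val_sub_mem_Ico, card_filter_val_sub_mem_Ico u _ (by omega)]
  omega

theorem disjoint_stepsFromTo_swap (u v : Fin n) : Disjoint (stepsFromTo u v) (stepsFromTo v u) :=
  disjoint_filter.mpr fun _ _ huv hvu => huv.1.asymm hvu.2

theorem sym2_mk_add_one_injective (hn : 3 ≤ n) :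
    Function.Injective fun s : Fin n => s(s, s + 1) := by
  intro s t hst
  rcases Sym2.eq_iff.mp hst with ⟨h, -⟩ | ⟨h, h'⟩
  · exact h
  · have hreturn : t + 1 + 1 = t := by rw [← h, h']
    have hone := val_add_one_sub_eq_ite t t
    have htwo := val_add_one_sub_eq_ite (t + 1) t
    rw [hreturn, hone, sub_self, Fin.val_zero] at htwo
    split_ifs at htwo <;> omega

theorem range_sym2_mk_add_one (hn : 2 ≤ n) :
    Set.range (fun s : Fin n => s(s, s + 1)) = (SimpleGraph.cycleGraph n).edgeSet := by
  refine Set.Subset.antisymm (Set.range_subset_iff.mpr (cycleGraph_adj_add_one hn)) fun e he => ?_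
  induction e using Sym2.ind with
  | _ x y =>
    obtain ⟨-, rfl | rfl⟩ := cycleGraph_adj_iff_eq_add_one.mp ((SimpleGraph.mem_edgeSet _).mp he)
    · exact ⟨y, Sym2.eq_swap⟩
    · exact ⟨x, rfl⟩

theorem disCount_cycleGraph_eq_card_add_card (hn : 3 ≤ n) (u v : Fin n) :
    disCount (SimpleGraph.cycleGraph n) u v = #(stepsFromTo u v) + #(stepsFromTo v u) := by
  rw [disCount_eq_card_filter_of_range_eq_edgeSet (sym2_mk_add_one_injective hn)
      (range_sym2_mk_add_one (by omega)),
    ← card_union_of_disjoint (disjoint_stepsFromTo_swap u v), stepsFromTo, stepsFromTo,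
    ← filter_or]
  refine congrArg card (filter_congr fun s _ => ?_)
  simp only [IsDisparate, Sym2.lift_mk]
  tauto

end Cycle

/-- **Lemma (distance-disparate edges on a cycle).**
For distinct vertices `u ≠ v` of the cycle graph `C` on `n ≥ 3` vertices,
`dis_C(u,v) = 2·d_C(u,v)` if `n` is even and `dis_C(u,v) = 2·d_C(u,v) - 1` if `n` is odd. -/
theorem disCount_cycleGraph (n : ℕ) (hn : 3 ≤ n) (u v : Fin n) (huv : u ≠ v) :
    disCount (SimpleGraph.cycleGraph n) u v =
      if Even n then 2 * (SimpleGraph.cycleGraph n).dist u v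
      else 2 * (SimpleGraph.cycleGraph n).dist u v - 1 := by
  have : NeZero n := ⟨by omega⟩
  have hsum : (v - u).val + (u - v).val = n := val_sub_add_val_sub huv.symm
  rw [disCount_cycleGraph_eq_card_add_card hn, card_stepsFromTo, card_stepsFromTo, dist_cycleGraph]
  split_ifs with hpar
  · rw [Nat.even_iff] at hpar
    omega
  · rw [Nat.not_even_iff] at hpar
    omega
end

section
/- Let u and v be vertices of a finite simple connected graph G, and let 𝔅 be the set of blocks of G obtained from the block-cut-vertex decomposition. For each block B in 𝔅, let u_B and v_B denote the vertices of B closest (in G) to u and to v, respectively. Then d_G(u,v) = Σ_{B ∈ 𝔅} d_G(u_B, v_B). -/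
open Finset

attribute [local instance] Classical.propDecidable

variable {V : Type*}

/-!
A block absorbs every path joining two of its vertices, for adding such a path creates no cut
vertex. So all walks from `u` to a block `B` enter `B` at the same vertex, which is therefore `u_B`.
Along a geodesic from `u` to `v`, a step `a b` changes only the summand of the block containing the
edge `ab`, because `a` and `b` enter every other block at the same vertex. In that block the summand
drops by one, since distances to `v` from its vertices are distances to `v_B` plus a constant.
-/

section Blocks

variable {G : SimpleGraph V} {a b g g' u v w x y z : V} {B H K : G.Subgraph}

lemma le_deleteVerts_of_disjoint {s : Set V} (hHK : H ≤ K) (hs : Disjoint H.verts s) :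
    H ≤ K.deleteVerts s := by
  have hH : H.deleteVerts s = H := by
    rw [← SimpleGraph.Subgraph.deleteVerts_inter_verts_left_eq, hs.inter_eq,
      SimpleGraph.Subgraph.deleteVerts_empty]
  exact hH ▸ SimpleGraph.Subgraph.deleteVerts_mono hHK

/-- The relation of being joined by a walk inside the subgraph `H`. Stating it for vertices of the
ambient graph allows `H` to vary without transporting vertices between subtypes. -/
def JoinedWithin (H : G.Subgraph) (x y : V) : Prop :=
  ∃ p : G.Walk x y, p.toSubgraph ≤ H

namespace JoinedWithin

lemma symm (h : JoinedWithin H x y) : JoinedWithin H y x := by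
  obtain ⟨p, hp⟩ := h
  exact ⟨p.reverse, by rwa [SimpleGraph.Walk.toSubgraph_reverse]⟩

lemma trans (hxy : JoinedWithin H x y) (hyz : JoinedWithin H y z) : JoinedWithin H x z := by
  obtain ⟨p, hp⟩ := hxy
  obtain ⟨q, hq⟩ := hyz
  exact ⟨p.append q, by rw [SimpleGraph.Walk.toSubgraph_append]; exact sup_le hp hq⟩

lemma mono (hHK : H ≤ K) (h : JoinedWithin H x y) : JoinedWithin K x y := by
  obtain ⟨p, hp⟩ := h
  exact ⟨p, hp.trans hHK⟩

lemma refl (hx : x ∈ H.verts) : JoinedWithin H x x :=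
  ⟨SimpleGraph.Walk.nil, by simpa using hx⟩

lemma deleteVerts_of_notMem_support (p : G.Walk x y) (hp : p.toSubgraph ≤ H)
    (hw : w ∉ p.support) : JoinedWithin (H.deleteVerts {w}) x y :=
  ⟨p, le_deleteVerts_of_disjoint hp (by simpa using hw)⟩

end JoinedWithin

lemma coe_preconnected_iff_joinedWithin :
    H.coe.Preconnected ↔ ∀ x ∈ H.verts, ∀ y ∈ H.verts, JoinedWithin H x y := by
  rw [← SimpleGraph.Subgraph.preconnected_iff,
    SimpleGraph.Subgraph.preconnected_iff_forall_exists_walk_subgraph]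
  exact ⟨fun h x hx y hy => h hx hy, fun h x y hx hy => h x hx y hy⟩

namespace NoCutVertexSub

lemma joinedWithin_deleteVerts (hH : NoCutVertexSub G H) (hx : x ∈ H.verts) (hy : y ∈ H.verts)
    (hxw : x ≠ w) (hyw : y ≠ w) : JoinedWithin (H.deleteVerts {w}) x y :=
  coe_preconnected_iff_joinedWithin.1 (hH.2 w) x ⟨hx, hxw⟩ y ⟨hy, hyw⟩

lemma joinedWithin (hH : NoCutVertexSub G H) (hx : x ∈ H.verts) (hy : y ∈ H.verts) :
    JoinedWithin H x y :=
  coe_preconnected_iff_joinedWithin.1 hH.1.preconnected.coe x hx y hy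

lemma of_le_of_joinedWithin (hH : NoCutVertexSub G H) (hHK : H ≤ K)
    (hK : ∀ w, ∀ x ∈ K.verts, x ≠ w →
      ∃ y ∈ H.verts, y ≠ w ∧ JoinedWithin (K.deleteVerts {w}) x y) :
    NoCutVertexSub G K := by
  obtain ⟨w₀, hw₀⟩ := hH.1.nonempty
  have exists_mem_core : ∀ x ∈ K.verts, ∃ y ∈ H.verts, JoinedWithin K x y := by
    intro x hx
    by_cases hxw : x = w₀
    · exact ⟨x, hxw ▸ hw₀, .refl hx⟩
    · obtain ⟨y, hy, -, hxy⟩ := hK w₀ x hx hxw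
      exact ⟨y, hy, hxy.mono SimpleGraph.Subgraph.deleteVerts_le⟩
  constructor
  · refine SimpleGraph.Subgraph.connected_iff.2 ⟨⟨coe_preconnected_iff_joinedWithin.2 ?_⟩,
      w₀, hHK.1 hw₀⟩
    intro x hx y hy
    obtain ⟨x', hx', hxx'⟩ := exists_mem_core x hx
    obtain ⟨y', hy', hyy'⟩ := exists_mem_core y hy
    exact (hxx'.trans ((hH.joinedWithin hx' hy').mono hHK)).trans hyy'.symm
  · refine fun w => coe_preconnected_iff_joinedWithin.2 ?_
    rintro x ⟨hx, hxw⟩ y ⟨hy, hyw⟩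
    obtain ⟨x', hx', hxw', hxx'⟩ := hK w x hx hxw
    obtain ⟨y', hy', hyw', hyy'⟩ := hK w y hy hyw
    have hxy' : JoinedWithin (K.deleteVerts {w}) x' y' :=
      (hH.joinedWithin_deleteVerts hx' hy' hxw' hyw').mono
        (SimpleGraph.Subgraph.deleteVerts_mono hHK)
    exact (hxx'.trans hxy').trans hyy'.symm

lemma sup_toSubgraph_of_isPath (hH : NoCutVertexSub G H) (hx : x ∈ H.verts) (hy : y ∈ H.verts)
    {p : G.Walk x y} (hp : p.IsPath) : NoCutVertexSub G (H ⊔ p.toSubgraph) := by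
  refine hH.of_le_of_joinedWithin le_sup_left ?_
  rintro w z (hz | hz) hzw
  · exact ⟨z, hz, hzw, .refl ⟨.inl hz, hzw⟩⟩
  obtain ⟨q, r, -, -, rfl⟩ :=
    hp.mem_support_iff_exists_append.1 ((SimpleGraph.Walk.mem_verts_toSubgraph p).1 hz)
  rw [SimpleGraph.Walk.toSubgraph_append]
  -- `w` lies on at most one side of `z`, so `z` can leave the path through the other end.
  by_cases hwq : w ∈ q.support
  · have hwr : w ∉ r.support := fun hwr => hp.ne_of_mem_support_of_append hzw.symm hwq hwr rfl
    exact ⟨y, hy, ne_of_mem_of_not_mem r.end_mem_support hwr,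
      .deleteVerts_of_notMem_support r (le_sup_right.trans le_sup_right) hwr⟩
  · exact ⟨x, hx, ne_of_mem_of_not_mem q.start_mem_support hwq,
      (JoinedWithin.deleteVerts_of_notMem_support q (le_sup_left.trans le_sup_right) hwq).symm⟩

end NoCutVertexSub

lemma noCutVertexSub_subgraphOfAdj (hab : G.Adj a b) :
    NoCutVertexSub G (G.subgraphOfAdj hab) := by
  refine ⟨SimpleGraph.Subgraph.subgraphOfAdj_connected hab, fun w =>
    coe_preconnected_iff_joinedWithin.2 ?_⟩
  have joined (haw : a ≠ w) (hbw : b ≠ w) :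
      JoinedWithin ((G.subgraphOfAdj hab).deleteVerts {w}) a b :=
    .deleteVerts_of_notMem_support hab.toWalk hab.toSubgraph_toWalk.le
      (by simp [haw.symm, hbw.symm])
  rintro x ⟨rfl | rfl, hxw⟩ y ⟨rfl | rfl, hyw⟩
  · exact JoinedWithin.refl ⟨.inl rfl, hxw⟩
  · exact joined hxw hyw
  · exact (joined hyw hxw).symm
  · exact JoinedWithin.refl ⟨.inr rfl, hxw⟩

/-- The block containing the edge `ab`, as the union of all subgraphs without cut vertex that
contain this edge. It is only meaningful for adjacent `a` and `b`. -/
def blockOfAdj (G : SimpleGraph V) (a b : V) : G.Subgraph :=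
  sSup {H | NoCutVertexSub G H ∧ H.Adj a b}

lemma NoCutVertexSub.le_blockOfAdj (hH : NoCutVertexSub G H) (hab : H.Adj a b) :
    H ≤ blockOfAdj G a b :=
  le_sSup ⟨hH, hab⟩

lemma blockOfAdj_adj (hab : G.Adj a b) : (blockOfAdj G a b).Adj a b :=
  ((noCutVertexSub_subgraphOfAdj hab).le_blockOfAdj (by simp)).2 (by simp)

lemma noCutVertexSub_blockOfAdj (hab : G.Adj a b) : NoCutVertexSub G (blockOfAdj G a b) := by
  have hE := noCutVertexSub_subgraphOfAdj hab
  refine hE.of_le_of_joinedWithin (hE.le_blockOfAdj (by simp)) fun w x hx hxw => ?_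
  obtain ⟨H, ⟨hH, hHab⟩, hxH⟩ :
      ∃ H : G.Subgraph, (NoCutVertexSub G H ∧ H.Adj a b) ∧ x ∈ H.verts := by
    simpa [blockOfAdj] using hx
  have joined (y : V) (hy : y ∈ H.verts) (hyw : y ≠ w) :
      JoinedWithin ((blockOfAdj G a b).deleteVerts {w}) x y :=
    (hH.joinedWithin_deleteVerts hxH hy hxw hyw).mono
      (SimpleGraph.Subgraph.deleteVerts_mono (hH.le_blockOfAdj hHab))
  by_cases haw : a = w
  · have hbw : b ≠ w := haw ▸ hab.ne'
    exact ⟨b, by simp, hbw, joined b (H.edge_vert hHab.symm) hbw⟩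
  · exact ⟨a, by simp, haw, joined a (H.edge_vert hHab) haw⟩

lemma isBlock_blockOfAdj (hab : G.Adj a b) : IsBlock G (blockOfAdj G a b) :=
  ⟨noCutVertexSub_blockOfAdj hab, fun _ hH hle =>
    hle.antisymm (hH.le_blockOfAdj (hle.2 (blockOfAdj_adj hab)))⟩

namespace IsBlock

lemma eq_blockOfAdj (hB : IsBlock G B) (hab : B.Adj a b) : B = blockOfAdj G a b :=
  hB.2 _ (noCutVertexSub_blockOfAdj hab.adj_sub) (hB.1.le_blockOfAdj hab)

lemma toSubgraph_le_of_isPath (hB : IsBlock G B) (hx : x ∈ B.verts) (hy : y ∈ B.verts)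
    {p : G.Walk x y} (hp : p.IsPath) : p.toSubgraph ≤ B :=
  sup_eq_left.1 (hB.2 _ (hB.1.sup_toSubgraph_of_isPath hx hy hp) le_sup_left).symm

lemma eq_of_reachable_deleteEdges (hB : IsBlock G B) (hx : x ∈ B.verts) (hy : y ∈ B.verts)
    (hxy : (G.deleteEdges B.edgeSet).Reachable x y) : x = y := by
  obtain ⟨p, hp⟩ := hxy.exists_isPath
  have hle := G.deleteEdges_le B.edgeSet
  have hpB := hB.toSubgraph_le_of_isPath hx hy (hp.mapLe hle)
  cases p with
  | nil => rfl
  | @cons _ b _ hadj _ =>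
    have first_edge_mem : B.Adj x b := hpB.2 (by simp)
    exact absurd first_edge_mem (SimpleGraph.deleteEdges_adj.1 hadj).2

end IsBlock

/-- `g` is a vertex of `B` that can be reached from `u` without using edges of `B`. If `B` is a
block, this is the cut-vertex description of the vertex `u_B`. -/
def IsEntrance (B : G.Subgraph) (u g : V) : Prop :=
  g ∈ B.verts ∧ (G.deleteEdges B.edgeSet).Reachable u g

namespace IsEntrance

lemma refl (hu : u ∈ B.verts) : IsEntrance B u u :=
  ⟨hu, .rfl⟩

lemma of_adj (h : IsEntrance B b g) (hab : G.Adj a b) (hB : ¬ B.Adj a b) : IsEntrance B a g :=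
  ⟨h.1, (SimpleGraph.deleteEdges_adj.2 ⟨hab, hB⟩).reachable.trans h.2⟩

lemma unique (h : IsEntrance B u g) (h' : IsEntrance B u g') (hB : IsBlock G B) : g = g' :=
  hB.eq_of_reachable_deleteEdges h.1 h'.1 (h.2.symm.trans h'.2)

lemma mem_support (h : IsEntrance B u g) (hB : IsBlock G B) (hx : x ∈ B.verts)
    (p : G.Walk u x) : g ∈ p.support := by
  induction p with
  | nil => simp [h.unique (.refl hx) hB]
  | @cons a b _ hab p ih =>
    by_cases hBab : B.Adj a b
    · simp [h.unique (.refl (B.edge_vert hBab)) hB]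
    · exact List.mem_cons_of_mem _ (ih (h.of_adj hab.symm fun h' => hBab h'.symm) hx)

lemma dist_eq_add (h : IsEntrance B u g) (hG : G.Connected) (hB : IsBlock G B)
    (hx : x ∈ B.verts) : G.dist u x = G.dist u g + G.dist g x := by
  obtain ⟨p, hp⟩ := hG.exists_walk_length_eq_dist u x
  obtain ⟨q, r, rfl⟩ := p.mem_support_iff_exists_append.1 (h.mem_support hB hx p)
  refine le_antisymm hG.dist_triangle ?_
  calc G.dist u g + G.dist g x ≤ q.length + r.length :=
        add_le_add (SimpleGraph.dist_le q) (SimpleGraph.dist_le r)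
    _ = G.dist u x := by rw [← hp, SimpleGraph.Walk.length_append]

end IsEntrance

lemma exists_isEntrance (hG : G.Preconnected) (hB : B.verts.Nonempty) (u : V) :
    ∃ g, IsEntrance B u g := by
  obtain ⟨x, hx⟩ := hB
  obtain ⟨p⟩ := hG u x
  induction p with
  | nil => exact ⟨_, .refl hx⟩
  | @cons a b _ hab _ ih =>
    by_cases hBab : B.Adj a b
    · exact ⟨a, .refl (B.edge_vert hBab)⟩
    · obtain ⟨g, hg⟩ := ih hx
      exact ⟨g, hg.of_adj hab hBab⟩

lemma IsEntrance.of_forall_dist_le (hG : G.Connected) (hB : IsBlock G B) (hx : x ∈ B.verts)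
    (hmin : ∀ y ∈ B.verts, G.dist u x ≤ G.dist u y) : IsEntrance B u x := by
  obtain ⟨g, hg⟩ := exists_isEntrance hG.preconnected hB.1.1.nonempty u
  have hgx : G.dist g x = 0 := by
    have dist_via_entrance := hg.dist_eq_add hG hB hx
    have dist_le_entrance := hmin g hg.1
    lia
  exact hG.dist_eq_zero_iff.1 hgx ▸ hg

variable {π : {B : G.Subgraph // IsBlock G B} → V → V}

lemma dist_entrance_eq_add_single (hG : G.Connected)
    (hπ : ∀ B x, IsEntrance B.1 x (π B x)) (hab : G.Adj a b) (hv : G.dist a v = G.dist b v + 1) :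
    (fun B => G.dist (π B a) (π B v)) = (fun B => G.dist (π B b) (π B v)) +
      Pi.single ⟨blockOfAdj G a b, isBlock_blockOfAdj hab⟩ 1 := by
  set C : {B : G.Subgraph // IsBlock G B} := ⟨blockOfAdj G a b, isBlock_blockOfAdj hab⟩
  have hC : C.1.Adj a b := blockOfAdj_adj hab
  funext B
  obtain rfl | hBC := eq_or_ne B C
  · have ha : a ∈ C.1.verts := C.1.edge_vert hC
    have hb : b ∈ C.1.verts := C.1.edge_vert hC.symm
    have hda := (hπ C v).dist_eq_add hG C.2 ha
    have hdb := (hπ C v).dist_eq_add hG C.2 hb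
    simp only [(hπ C a).unique (.refl ha) C.2, (hπ C b).unique (.refl hb) C.2, Pi.add_apply,
      Pi.single_eq_same]
    rw [G.dist_comm (u := a), G.dist_comm (u := b)] at hv ⊢
    lia
  · have hBab : ¬ B.1.Adj a b := fun h => hBC (Subtype.ext (B.2.eq_blockOfAdj h))
    have hab_eq : π B a = π B b := (hπ B a).unique ((hπ B b).of_adj hab hBab) B.2
    simp only [hab_eq, Pi.add_apply, Pi.single_eq_of_ne hBC, add_zero]

lemma hasSum_dist_entrance (hG : G.Connected) (hπ : ∀ B x, IsEntrance B.1 x (π B x))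
    (p : G.Walk u v) (hp : p.length = G.dist u v) :
    HasSum (fun B => G.dist (π B u) (π B v)) (G.dist u v) := by
  induction p with
  | nil => simpa only [SimpleGraph.dist_self] using hasSum_zero
  | @cons a b v hab p ih =>
    have hpb : p.length = G.dist b v := by
      have dist_le_length := SimpleGraph.dist_le p
      have triangle : G.dist a v ≤ G.dist a b + G.dist b v := hG.dist_triangle
      rw [SimpleGraph.dist_eq_one_iff_adj.2 hab] at triangle
      rw [SimpleGraph.Walk.length_cons] at hp
      lia
    have hv : G.dist a v = G.dist b v + 1 := by
      rw [← hp, ← hpb, SimpleGraph.Walk.length_cons]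
    rw [dist_entrance_eq_add_single hG hπ hab hv, hv]
    exact (ih hpb).add (hasSum_pi_single _ 1)

/-- As `ℕ` is discrete, `HasSum` says that only finitely many summands are nonzero. -/
theorem dist_eq_sum_blocks_general (hG : G.Connected) (u v : V) (uB vB : G.Subgraph → V)
    (huB : ∀ B, IsBlock G B → uB B ∈ B.verts ∧ ∀ x ∈ B.verts, G.dist u (uB B) ≤ G.dist u x)
    (hvB : ∀ B, IsBlock G B → vB B ∈ B.verts ∧ ∀ x ∈ B.verts, G.dist v (vB B) ≤ G.dist v x) :
    HasSum (fun B : {B // IsBlock G B} => G.dist (uB B) (vB B)) (G.dist u v) := by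
  choose π hπ using fun B : {B // IsBlock G B} => exists_isEntrance hG.preconnected B.2.1.1.nonempty
  obtain ⟨p, hp⟩ := hG.exists_walk_length_eq_dist u v
  convert hasSum_dist_entrance hG hπ p hp with B
  · exact (IsEntrance.of_forall_dist_le hG B.2 (huB B B.2).1 (huB B B.2).2).unique (hπ B u) B.2
  · exact (IsEntrance.of_forall_dist_le hG B.2 (hvB B B.2).1 (hvB B B.2).2).unique (hπ B v) B.2

end Blocks

/-- **Proposition (distance partition over blocks).**
For vertices `u, v` of a finite simple connected graph `G` with set of blocks `𝔅`, where
`uB B` and `vB B` denote the vertices of the block `B` closest in `G` to `u` and to `v`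
respectively, `d_G(u,v) = Σ_{B ∈ 𝔅} d_G(u_B, v_B)`. -/
theorem dist_eq_sum_blocks [Fintype V] (G : SimpleGraph V) (hG : G.Connected) (u v : V)
    (𝔅 : Finset G.Subgraph) (h𝔅 : ∀ B : G.Subgraph, B ∈ 𝔅 ↔ IsBlock G B)
    (uB vB : G.Subgraph → V)
    (huB : ∀ B ∈ 𝔅, uB B ∈ B.verts ∧ ∀ x ∈ B.verts, G.dist u (uB B) ≤ G.dist u x)
    (hvB : ∀ B ∈ 𝔅, vB B ∈ B.verts ∧ ∀ x ∈ B.verts, G.dist v (vB B) ≤ G.dist v x) :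
    G.dist u v = ∑ B ∈ 𝔅, G.dist (uB B) (vB B) := by
  simp only [h𝔅] at huB hvB
  exact ((Equiv.subtypeEquivRight h𝔅).hasSum_iff.2 <|
    dist_eq_sum_blocks_general hG u v uB vB huB hvB).unique (𝔅.hasSum _)
end

section
/- Let G be a finite simple connected graph. Then Σ_{{s,t} ∈ E(G)} o_G(s,t)² = Σ_{(u,v) ∈ V(G)×V(G)} deq_G(u,v), where the right-hand sum is over all ordered pairs of vertices. -/
open Finset

attribute [local instance] Classical.propDecidable

variable {V : Type*}

theorem sum_card_bipartiteBelow_sq {α β : Type*} (r : α → β → Prop)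
    [∀ a b, Decidable (r a b)] (s : Finset α) (t : Finset β) :
    ∑ b ∈ t, #(s.bipartiteBelow r b) ^ 2 = ∑ a ∈ s, ∑ a' ∈ s, #{b ∈ t | r a b ∧ r a' b} := by
  let both (p : α × α) (b : β) : Prop := r p.1 b ∧ r p.2 b
  calc ∑ b ∈ t, #(s.bipartiteBelow r b) ^ 2
      = ∑ b ∈ t, #((s ×ˢ s).bipartiteBelow both b) :=
        sum_congr rfl fun b _ ↦ by
          simp only [sq, bipartiteBelow, both, ← card_product, ← filter_product]
    _ = ∑ p ∈ s ×ˢ s, #(t.bipartiteAbove both p) :=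
        (sum_card_bipartiteAbove_eq_sum_card_bipartiteBelow both).symm
    _ = ∑ a ∈ s, ∑ a' ∈ s, #{b ∈ t | r a b ∧ r a' b} := sum_product ..

/-- The vertex `w` is equidistant from the two members of `e`: an unordered pair has equal
distances from `w` exactly when its image under `G.dist w` lies on the diagonal of `Sym2 ℕ`. -/
def IsEquidistant (G : SimpleGraph V) (w : V) (e : Sym2 V) : Prop :=
  (e.map (G.dist w)).IsDiag

theorem equidistSym2_eq_card_bipartiteBelow [Fintype V] (G : SimpleGraph V) (e : Sym2 V) :
    equidistSym2 G e = #(univ.bipartiteBelow (IsEquidistant G) e) := by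
  induction e with
  | _ s t =>
    -- The two filters differ only in their decidability instances.
    exact congrArg card (filter_congr fun _ _ ↦ Iff.rfl)

theorem isDistEqual_iff_isEquidistant (G : SimpleGraph V) (u v : V) (e : Sym2 V) :
    IsDistEqual G u v e ↔ IsEquidistant G u e ∧ IsEquidistant G v e := by
  induction e with
  | _ s t => rfl

/- For disconnected `G` the convention `G.dist = 0` between components is harmless: the ends of an
edge share a component, so a vertex outside it is equidistant from them, as with distance `∞`. -/
theorem sum_equidist_sq_eq_sum_deq_general [Fintype V] (G : SimpleGraph V) :
    ∑ e ∈ G.edgeFinset, (equidistSym2 G e) ^ 2 = ∑ u : V, ∑ v : V, deqCount G u v := by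
  simp only [equidistSym2_eq_card_bipartiteBelow, deqCount, isDistEqual_iff_isEquidistant]
  exact sum_card_bipartiteBelow_sq (IsEquidistant G) univ G.edgeFinset

/-- **Lemma.** For a finite simple connected graph `G`,
`Σ_{{s,t} ∈ E(G)} o_G(s,t)² = Σ_{(u,v) ∈ V(G)×V(G)} deq_G(u,v)`. -/
theorem sum_equidist_sq_eq_sum_deq [Fintype V] (G : SimpleGraph V) (hG : G.Connected) :
    ∑ e ∈ G.edgeFinset, (equidistSym2 G e) ^ 2 = ∑ u : V, ∑ v : V, deqCount G u v :=
  sum_equidist_sq_eq_sum_deq_general G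
end

section
/- Let G be a cactus graph. Then Sz(G) ≤ 2·W(G). -/
open Finset

attribute [local instance] Classical.propDecidable

variable {V : Type*}

/-!
A pair `{u, v}` and an edge `e` are *disparate* if `u` and `v` lie strictly closer to different
ends of `e`. Counting disparate incidences by edges gives `Sz(G)`, so it suffices to show that
every pair `{u, v}` is disparate with at most `2 · d(u, v)` edges.

When `u` moves one step to a neighbour `w`, the only edges which can cease to be disparate are
those which point away from `u` but not from `w`. Such an edge, if it is not `{u, w}` itself, is
the middle edge (rounding towards `u`) of a path from `u` to `w` avoiding `{u, w}`. In a cactus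
`{u, w}` lies on at most one cycle, so there is at most one such path: each step loses at most two
edges, and none are left once `u = v`.
-/

open SimpleGraph

section Blocks

variable {G : SimpleGraph V} {H K B : G.Subgraph} {u v x : V}

lemma toSubgraph_le_deleteVerts (p : G.Walk u v) (hp : p.toSubgraph ≤ H) (hx : x ∉ p.support) :
    p.toSubgraph ≤ H.deleteVerts {x} := by
  refine ⟨fun y hy => ⟨hp.1 hy, ?_⟩, fun y z hyz => Subgraph.deleteVerts_adj.2
    ⟨hp.1 hyz.fst_mem, ?_, hp.1 hyz.snd_mem, ?_, hp.2 hyz⟩⟩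
  · rintro rfl
    exact hx (p.mem_verts_toSubgraph.1 hy)
  · rintro rfl
    exact hx (p.mem_verts_toSubgraph.1 hyz.fst_mem)
  · rintro rfl
    exact hx (p.mem_verts_toSubgraph.1 hyz.snd_mem)

lemma NoCutVertexSub.sup (hH : NoCutVertexSub G H) (hK : NoCutVertexSub G K)
    (hHK : (H ⊓ K).verts.Nontrivial) : NoCutVertexSub G (H ⊔ K) := by
  refine ⟨Subgraph.connected_sup hH.1.preconnected hK.1.preconnected hHK.nonempty, fun x => ?_⟩
  obtain ⟨z, hz, hzx⟩ := hHK.exists_ne x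
  have hsup : (H.deleteVerts {x} ⊔ K.deleteVerts {x}).Connected :=
    Subgraph.connected_sup ⟨hH.2 x⟩ ⟨hK.2 x⟩ ⟨z, ⟨hz.1, hzx⟩, ⟨hz.2, hzx⟩⟩
  exact (hsup.mono (sup_le (Subgraph.deleteVerts_mono le_sup_left)
    (Subgraph.deleteVerts_mono le_sup_right)) Set.union_sdiff_distrib.symm).preconnected.coe

/-- Deleting a vertex from a cycle leaves the path through the remaining vertices. -/
lemma deleteVerts_connected_of_isCycle {c : G.Walk x x} (hc : c.IsCycle) :
    (c.toSubgraph.deleteVerts {x}).Connected := by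
  cases c with
  | nil => exact absurd hc Walk.not_isCycle_nil
  | @cons _ y _ h p =>
    have hp : p.IsPath := ((Walk.cons_isCycle_iff p h).1 hc).1
    have hnil : ¬ p.Nil := fun hnil => h.ne' hnil.eq
    have hsupport : p.dropLast.support ++ [x] = p.support := Walk.support_dropLast_concat hnil
    have hx : x ∉ p.dropLast.support := by
      have hnodup := hsupport ▸ hp.support_nodup
      exact fun hx => List.disjoint_of_nodup_append hnodup hx (List.mem_singleton_self x)
    have hle : p.dropLast.toSubgraph ≤ (Walk.cons h p).toSubgraph := by
      conv_rhs => rw [← p.concat_dropLast (p.adj_penultimate hnil), Walk.concat_eq_append,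
        Walk.toSubgraph, Walk.toSubgraph_append]
      exact le_sup_left.trans le_sup_right
    refine p.dropLast.toSubgraph_connected.mono (toSubgraph_le_deleteVerts _ hle hx) ?_
    ext z
    simp only [Subgraph.deleteVerts_verts, Walk.verts_toSubgraph, Walk.support_cons, ← hsupport]
    grind

lemma noCutVertexSub_toSubgraph_of_isCycle {c : G.Walk u u} (hc : c.IsCycle) :
    NoCutVertexSub G c.toSubgraph := by
  refine ⟨c.toSubgraph_connected, fun x => ?_⟩
  by_cases hx : x ∈ c.support
  · rw [← c.toSubgraph_rotate hx]
    exact (deleteVerts_connected_of_isCycle (hc.rotate hx)).preconnected.coe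
  · rw [← Subgraph.deleteVerts_inter_verts_left_eq, Set.inter_singleton_eq_empty.2 (by simpa),
      Subgraph.deleteVerts_empty]
    exact c.toSubgraph_connected.preconnected.coe

lemma exists_isBlock_ge [Finite V] (hH : NoCutVertexSub G H) : ∃ B, IsBlock G B ∧ H ≤ B := by
  obtain ⟨B, hHB, hB⟩ := Finite.exists_le_maximal hH
  exact ⟨B, ⟨hB.1, fun K hK hBK => hB.eq_of_le hK hBK⟩, hHB⟩

lemma encard_pair_le_two {α : Type*} (a b : α) : ({a, b} : Set α).encard ≤ 2 := by
  rw [← one_add_one_eq_two]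
  exact Set.encard_singleton b ▸ Set.encard_insert_le {b} a

lemma IsEdgeBlock.encard_neighborSet_le_two (hB : IsEdgeBlock G B) (x : V) :
    (B.neighborSet x).encard ≤ 2 := by
  obtain ⟨a, b, hab, rfl⟩ := hB
  exact (Set.encard_le_encard (neighborSet_subgraphOfAdj_subset hab)).trans
    (encard_pair_le_two a b)

lemma IsCycleBlock.encard_neighborSet_le_two (hB : IsCycleBlock G B) (x : V) :
    (B.neighborSet x).encard ≤ 2 := by
  obtain ⟨n, hn, ⟨φ⟩⟩ := hB
  obtain ⟨m, rfl⟩ := Nat.exists_eq_add_of_le' (show 2 ≤ n by omega)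
  by_cases hx : x ∈ B.verts
  · rw [← Set.encard_congr (Subgraph.coeNeighborSetEquiv ⟨x, hx⟩),
      Set.encard_congr (φ.mapNeighborSet ⟨x, hx⟩), cycleGraph_neighborSet]
    exact encard_pair_le_two _ _
  · have hempty : B.neighborSet x = ∅ :=
      Set.eq_empty_of_forall_notMem fun y hy => hx (B.edge_vert hy)
    simp [hempty]

lemma IsCactus.encard_neighborSet_le_two (hG : IsCactus G) (hB : IsBlock G B) (x : V) :
    (B.neighborSet x).encard ≤ 2 :=
  (hG.2 B hB).elim (·.encard_neighborSet_le_two x) (·.encard_neighborSet_le_two x)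

end Blocks

section UniquePath

variable {G : SimpleGraph V} {B : G.Subgraph} {u w x : V}

/-- A walk which enters `u` from `x` and never turns back has no choice in a subgraph of maximum
degree two. -/
lemma isPath_unique_of_encard_neighborSet_le_two (hB : ∀ y, (B.neighborSet y).encard ≤ 2)
    {p q : G.Walk u w} (hp : p.IsPath) (hq : q.IsPath) (hpB : p.toSubgraph ≤ B)
    (hqB : q.toSubgraph ≤ B) (hx : B.Adj u x) (hxp : s(x, u) ∉ p.edges) (hxq : s(x, u) ∉ q.edges) :
    p = q := by
  induction p generalizing x with
  | nil => exact (Walk.isPath_iff_nil.1 hq).eq_nil.symm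
  | @cons a b c hab p ih =>
    cases q with
    | nil => exact absurd (Walk.isPath_iff_nil.1 hp) (by simp)
    | @cons _ b' _ hab' q =>
      simp only [Walk.toSubgraph, sup_le_iff] at hpB hqB
      have hBb : B.Adj a b := hpB.1.2 (by simp)
      have hBb' : B.Adj a b' := hqB.1.2 (by simp)
      simp only [Walk.edges_cons, List.mem_cons, not_or] at hxp hxq
      have hbx : b ≠ x := by rintro rfl; exact hxp.1 Sym2.eq_swap
      have hbx' : b' ≠ x := by rintro rfl; exact hxq.1 Sym2.eq_swap
      obtain rfl : b = b' := by
        by_contra hbb'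
        have hthree : ({b, b', x} : Set V).encard = 3 :=
          Set.encard_eq_three.2 ⟨b, b', x, hbb', hbx, hbx', rfl⟩
        have hsub : {b, b', x} ⊆ B.neighborSet a := by
          rintro y (rfl | rfl | rfl) <;> assumption
        exact absurd (hthree ▸ (Set.encard_le_encard hsub).trans (hB a)) (by norm_num)
      have hpt := (Walk.isTrail_cons hab p).1 hp.isTrail
      have hqt := (Walk.isTrail_cons hab' q).1 hq.isTrail
      rw [ih hp.of_cons hq.of_cons hpB.2 hqB.2 hBb.symm hpt.2 hqt.2]

lemma IsCactus.isPath_unique [Finite V] (hG : IsCactus G) (huw : G.Adj u w) {p q : G.Walk u w}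
    (hp : p.IsPath) (hq : q.IsPath) (hup : s(u, w) ∉ p.edges) (huq : s(u, w) ∉ q.edges) :
    p = q := by
  rw [Sym2.eq_swap] at hup huq
  have hpc := noCutVertexSub_toSubgraph_of_isCycle
    ((Walk.cons_isCycle_iff p huw.symm).2 ⟨hp, hup⟩)
  have hqc := noCutVertexSub_toSubgraph_of_isCycle
    ((Walk.cons_isCycle_iff q huw.symm).2 ⟨hq, huq⟩)
  obtain ⟨B, hB, hle⟩ := exists_isBlock_ge <|
    hpc.sup hqc ⟨u, by simp, w, by simp, huw.ne⟩
  simp only [Walk.toSubgraph, sup_le_iff] at hle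
  exact isPath_unique_of_encard_neighborSet_le_two (hG.encard_neighborSet_le_two hB) hp hq
    hle.1.2 hle.2.2 (hle.1.1.2 (by simp)) hup huq

end UniquePath

section TurnedEdges

variable {G : SimpleGraph V} {u v w s t : V} {e e' : Sym2 V}

/-- The edge `e` is *turned* by moving from `u` to `w`: one of its ends is strictly closer than the
other to `u`, but not to `w`. -/
def IsTurned (G : SimpleGraph V) (u w : V) (e : Sym2 V) : Prop :=
  ∃ s t, e = s(s, t) ∧ G.dist u s < G.dist u t ∧ G.dist w t ≤ G.dist w s

lemma IsDisparate.isTurned_or_isDisparate (h : IsDisparate G u v e) (w : V) :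
    IsTurned G u w e ∨ IsDisparate G w v e := by
  induction e with | _ s t
  rcases h with ⟨hu, hv⟩ | ⟨hu, hv⟩
  · rcases lt_or_ge (G.dist w s) (G.dist w t) with hw | hw
    · exact .inr (.inl ⟨hw, hv⟩)
    · exact .inl ⟨s, t, rfl, hu, hw⟩
  · rcases lt_or_ge (G.dist w t) (G.dist w s) with hw | hw
    · exact .inr (.inr ⟨hw, hv⟩)
    · exact .inl ⟨t, s, Sym2.eq_swap, hu, hw⟩

lemma not_isDisparate_self : ¬ IsDisparate G v v e := by
  induction e with | _ s t
  rintro (⟨h, h'⟩ | ⟨h, h'⟩) <;> exact h.asymm h'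

lemma disjoint_support_of_length_eq_dist {p : G.Walk u s} {q : G.Walk t w}
    (hp : p.length = G.dist u s) (hq : q.length = G.dist t w)
    (hu : G.dist u s < G.dist u t) (hw : G.dist t w ≤ G.dist s w) :
    p.support.Disjoint q.support := by
  intro x hxp hxq
  have hplen := congrArg Walk.length (p.take_spec hxp)
  have hqlen := congrArg Walk.length (q.take_spec hxq)
  have hut := dist_le ((p.takeUntil x hxp).append (q.takeUntil x hxq).reverse)
  have hsw := dist_le ((p.dropUntil x hxp).reverse.append (q.dropUntil x hxq))
  simp only [Walk.length_append, Walk.length_reverse] at hplen hqlen hut hsw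
  omega

lemma exists_isPath_length_eq_dist_add_dist (hG : G.Connected) (hst : G.Adj s t)
    (hu : G.dist u s < G.dist u t) (hw : G.dist w t ≤ G.dist w s) :
    ∃ p : G.Walk u w, p.IsPath ∧ p.length = G.dist u s + 1 + G.dist w t ∧
      p.getVert (G.dist u s) = s ∧ p.getVert (G.dist u s + 1) = t := by
  obtain ⟨p, hp, hplen⟩ := hG.exists_path_of_dist u s
  obtain ⟨q, hq, hqlen⟩ := hG.exists_path_of_dist t w
  rw [dist_comm, G.dist_comm (u := w)] at hw
  have hpq := disjoint_support_of_length_eq_dist hplen hqlen hu hw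
  refine ⟨p.append (.cons hst q), ?_, ?_, ?_, ?_⟩
  · rw [Walk.isPath_def, Walk.support_append, Walk.support_cons, List.tail_cons]
    exact hp.support_nodup.append hq.support_nodup hpq
  · rw [Walk.length_append, Walk.length_cons, hplen, hqlen, dist_comm (u := w)]
    omega
  · simp [Walk.getVert_append, hplen]
  · simp [Walk.getVert_append, hplen]

lemma IsTurned.exists_isPath_middle_edge (hG : G.Connected) (huw : G.Adj u w) (he : e ∈ G.edgeSet)
    (h : IsTurned G u w e) (hne : e ≠ s(u, w)) :
    ∃ p : G.Walk u w, p.IsPath ∧ s(u, w) ∉ p.edges ∧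
      e = s(p.getVert ((p.length - 1) / 2), p.getVert ((p.length - 1) / 2 + 1)) := by
  obtain ⟨s, t, rfl, hu, hw⟩ := h
  obtain ⟨p, hp, hlen, hs, ht⟩ :=
    exists_isPath_length_eq_dist_add_dist hG (G.mem_edgeSet.1 he) hu hw
  refine ⟨p, hp, fun hmem => hne ?_, ?_⟩
  · have hone := hp.length_eq_one_of_mem_edges hmem
    rw [hG.dist_eq_zero_iff.1 (show G.dist u s = 0 by omega),
      hG.dist_eq_zero_iff.1 (show G.dist w t = 0 by omega)]
  · have hdist_uw := dist_eq_one_iff_adj.2 huw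
    have hdist_ws := hG.dist_triangle (u := w) (v := u) (w := s)
    have hdist_ut := hG.dist_triangle (u := u) (v := w) (w := t)
    rw [G.dist_comm (u := w) (v := u)] at hdist_ws
    -- `d(w, t)` is `d(u, s)` or `d(u, s) + 1`, so rounding down recovers `d(u, s)`.
    have hmid : (p.length - 1) / 2 = G.dist u s := by omega
    rw [hmid, hs, ht]

lemma IsCactus.isTurned_unique [Finite V] (hG : IsCactus G) (huw : G.Adj u w)
    (he : e ∈ G.edgeSet) (he' : e' ∈ G.edgeSet) (h : IsTurned G u w e) (h' : IsTurned G u w e')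
    (hne : e ≠ s(u, w)) (hne' : e' ≠ s(u, w)) : e = e' := by
  obtain ⟨p, hp, hup, hep⟩ := h.exists_isPath_middle_edge hG.1 huw he hne
  obtain ⟨q, hq, huq, heq⟩ := h'.exists_isPath_middle_edge hG.1 huw he' hne'
  rw [hep, heq, hG.isPath_unique huw hp hq hup huq]

lemma IsCactus.card_isTurned_le_two [Fintype V] (hG : IsCactus G) (huw : G.Adj u w) :
    #{e ∈ G.edgeFinset | IsTurned G u w e} ≤ 2 := by
  have herase : #({e ∈ G.edgeFinset | IsTurned G u w e}.erase s(u, w)) ≤ 1 := by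
    refine card_le_one.2 fun e he e' he' => ?_
    simp only [mem_erase, mem_filter, mem_edgeFinset] at he he'
    exact hG.isTurned_unique huw he.2.1 he'.2.1 he.2.2 he'.2.2 he.1 he'.1
  exact Nat.sub_le_iff_le_add.1 (pred_card_le_card_erase.trans herase)

end TurnedEdges

section DisparateEdges

variable [Fintype V] {G : SimpleGraph V} {u v w : V}

lemma disCount_self (v : V) : disCount G v v = 0 := by
  simp [disCount, not_isDisparate_self]

lemma IsCactus.disCount_le_add_two (hG : IsCactus G) (huw : G.Adj u w) (v : V) :
    disCount G u v ≤ disCount G w v + 2 := by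
  have hsub : {e ∈ G.edgeFinset | IsDisparate G u v e} ⊆
      {e ∈ G.edgeFinset | IsTurned G u w e ∨ IsDisparate G w v e} :=
    monotone_filter_right _ fun _ _ h => h.isTurned_or_isDisparate w
  rw [filter_or] at hsub
  calc disCount G u v
      ≤ #{e ∈ G.edgeFinset | IsTurned G u w e} + disCount G w v :=
        (card_le_card hsub).trans (card_union_le _ _)
    _ ≤ disCount G w v + 2 := by
        rw [add_comm]
        exact Nat.add_le_add_left (hG.card_isTurned_le_two huw) _

lemma IsCactus.disCount_le_two_mul_length (hG : IsCactus G) (p : G.Walk u v) :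
    disCount G u v ≤ 2 * p.length := by
  induction p with
  | nil => exact (disCount_self _).le
  | cons h p ih =>
    rw [Walk.length_cons, mul_add_one]
    exact (hG.disCount_le_add_two h _).trans (Nat.add_le_add_right ih 2)

lemma IsCactus.disCount_le_two_mul_dist (hG : IsCactus G) (u v : V) :
    disCount G u v ≤ 2 * G.dist u v := by
  obtain ⟨p, hp⟩ := hG.1.exists_walk_length_eq_dist u v
  exact hp ▸ hG.disCount_le_two_mul_length p

end DisparateEdges

section DoubleCounting

lemma card_image_sym2Mk_product {α : Type*} {A B : Finset α} (hAB : Disjoint A B) :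
    #((A ×ˢ B).image fun x => s(x.1, x.2)) = #A * #B := by
  rw [card_image_of_injOn, card_product]
  rintro ⟨a, b⟩ hab ⟨a', b'⟩ hab' h
  simp only [coe_product, Set.mem_prod, mem_coe] at hab hab'
  rcases Sym2.eq_iff.1 h with ⟨rfl, rfl⟩ | ⟨rfl, rfl⟩
  · rfl
  · exact absurd hab'.2 (disjoint_left.1 hAB hab.1)

lemma isDisparate_comm (G : SimpleGraph V) (u v : V) : IsDisparate G u v = IsDisparate G v u := by
  ext e
  induction e with | _ s t
  exact or_comm.trans (or_congr and_comm and_comm)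

/-- `IsDisparate` as a relation between unordered pairs of vertices and edges. -/
def IsDisparateSym2 (G : SimpleGraph V) : Sym2 V → Sym2 V → Prop :=
  Sym2.lift ⟨IsDisparate G, isDisparate_comm G⟩

variable [Fintype V]

lemma card_isDisparateSym2 (G : SimpleGraph V) (s t : V) :
    #{p | IsDisparateSym2 G p s(s, t)} = closerCount G s t * closerCount G t s := by
  rw [closerCount, closerCount,
    ← card_image_sym2Mk_product (disjoint_filter.2 fun _ _ => lt_asymm)]
  congr 1
  ext p
  induction p with | _ u v
  simp only [mem_filter_univ, mem_image, mem_product, Prod.exists, Sym2.eq_iff]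
  change _ ∨ _ ↔ _
  grind

lemma szeged_eq_sum_card_isDisparateSym2 (G : SimpleGraph V) :
    szeged G = ∑ p, #{e ∈ G.edgeFinset | IsDisparateSym2 G p e} := by
  rw [szeged]
  refine Eq.trans (sum_congr rfl fun e _ => ?_)
    (sum_card_bipartiteAbove_eq_sum_card_bipartiteBelow (s := univ) (IsDisparateSym2 G)).symm
  induction e with | _ s t
  exact (card_isDisparateSym2 G s t).symm

end DoubleCounting

/-- **Theorem.** For a cactus graph `G`, `Sz(G) ≤ 2·W(G)`. -/
theorem szeged_le_two_wiener [Fintype V] (G : SimpleGraph V) (hG : IsCactus G) :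
    szeged G ≤ 2 * wiener G := by
  rw [szeged_eq_sum_card_isDisparateSym2, wiener, mul_sum]
  refine sum_le_sum fun p _ => ?_
  induction p with | _ u v
  exact hG.disCount_le_two_mul_dist u v
end
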